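/- Let N ≥ 1, M ≥ 1, and K be natural numbers with 1 ≤ K ≤ N. If (N choose K)² · M · exp(−K²/(3M)) < 1 (as real numbers), then there exists a function f : Fin N × Fin N → Fin M such that for all sets B1, B2 ⊆ Fin N with |B1| = |B2| = K and every a ∈ Fin M, one has M · |{(u,v) ∈ B1 × B2 : f(u,v) = a}| ≤ 2·K². -/

import Mathlib

lemma two_pow_count_eq {α : Type*} [Fintype α] [DecidableEq α] {M : ℕ} (B : Finset α)
    (a : Fin M) (f : α → Fin M) :
    (2 : ℝ) ^ (B.filter (fun x => f x = a)).card
      = ∏ x, (if x ∈ B ∧ f x = a then (2 : ℝ) else 1) := by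
  rw [Finset.prod_ite]
  simp only [Finset.prod_const, one_pow, mul_one]
  congr 2
  ext x
  simp

lemma sum_two_pow_count {α : Type*} [Fintype α] [DecidableEq α] {M : ℕ} (hM : 1 ≤ M)
    (B : Finset α) (a : Fin M) :
    ∑ f : α → Fin M, (2 : ℝ) ^ (B.filter (fun x => f x = a)).card
      ≤ (M : ℝ) ^ (Fintype.card α) * Real.exp ((B.card : ℝ) / M) := by
  have hM0 : (0 : ℝ) < M := by exact_mod_cast hM
  simp_rw [two_pow_count_eq]
  have h := Finset.prod_univ_sum (fun _ : α => (Finset.univ : Finset (Fin M)))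
    (fun x b => (if x ∈ B ∧ b = a then (2 : ℝ) else 1))
  rw [Fintype.piFinset_univ] at h
  rw [← h]
  have h1 : ∀ x : α, ∑ b : Fin M, (if x ∈ B ∧ b = a then (2 : ℝ) else 1)
      = M * (if x ∈ B then 1 + 1 / (M : ℝ) else 1) := by
    intro x
    by_cases hx : x ∈ B
    · have : ∀ b : Fin M, (if x ∈ B ∧ b = a then (2 : ℝ) else 1)
          = 1 + (if b = a then 1 else 0) := by
        intro b
        by_cases hb : b = a <;> simp [hx, hb]
        norm_num
      simp_rw [this, Finset.sum_add_distrib]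
      simp [hx]
      field_simp
    · simp [hx]
  simp_rw [h1, Finset.prod_mul_distrib]
  rw [Finset.prod_const, Finset.card_univ]
  gcongr
  rw [Finset.prod_ite]
  simp only [Finset.prod_const, one_pow, mul_one, Finset.filter_univ_mem]
  have h2 : 1 + 1 / (M : ℝ) ≤ Real.exp (1 / M) := by
    rw [add_comm]; exact Real.add_one_le_exp _
  calc (1 + 1 / (M : ℝ)) ^ B.card ≤ (Real.exp (1 / M)) ^ B.card := by gcongr
    _ = _ := by rw [← Real.exp_nat_mul]; congr 1; ring

/-- Union-bound step of the probabilistic construction: if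
`(N choose K)² · M · exp(−K²/(3M)) < 1`, then there is a coloring
`f : Fin N × Fin N → Fin M` such that in every `K × K` rectangle each color appears
at most `2K²/M` times. -/
theorem exists_coloring_of_union_bound (N M K : ℕ) (hN : 1 ≤ N) (hM : 1 ≤ M)
    (hK1 : 1 ≤ K) (hKN : K ≤ N)
    (hbound : ((N.choose K : ℝ)) ^ 2 * M * Real.exp (-((K : ℝ) ^ 2) / (3 * M)) < 1) :
    ∃ f : Fin N × Fin N → Fin M,
      ∀ B1 B2 : Finset (Fin N), B1.card = K → B2.card = K →
        ∀ a : Fin M,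
          (M : ℝ) * (((B1 ×ˢ B2).filter (fun uv => f uv = a)).card : ℝ) ≤
            2 * (K : ℝ) ^ 2 := by
  classical
  have hM0 : (0 : ℝ) < M := by exact_mod_cast hM
  haveI : Nonempty (Fin M) := ⟨⟨0, hM⟩⟩
  set P := Finset.powersetCard K (Finset.univ : Finset (Fin N)) with hP
  have hPc : P.card = N.choose K := by simp [hP]
  set μ : ℝ := (K : ℝ) ^ 2 / M with hμ
  have hμ0 : 0 ≤ μ := by positivity
  let W : (Fin N × Fin N → Fin M) → ℝ := fun f =>
    ∑ t ∈ (P ×ˢ P) ×ˢ (Finset.univ : Finset (Fin M)),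
      (2 : ℝ) ^ ((t.1.1 ×ˢ t.1.2).filter (fun uv => f uv = t.2)).card
  have hsum : ∑ f, W f ≤ ∑ _f : Fin N × Fin N → Fin M,
      ((N.choose K : ℝ) ^ 2 * M * Real.exp μ) := by
    simp only [W]
    rw [Finset.sum_comm]
    calc _ ≤ ∑ t ∈ (P ×ˢ P) ×ˢ (Finset.univ : Finset (Fin M)),
          (M : ℝ) ^ (Fintype.card (Fin N × Fin N)) * Real.exp μ := by
            apply Finset.sum_le_sum
            rintro ⟨⟨B1, B2⟩, a⟩ ht
            simp only [Finset.mem_product, hP, Finset.mem_powersetCard] at ht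
            refine (sum_two_pow_count hM (B1 ×ˢ B2) a).trans (le_of_eq ?_)
            rw [Finset.card_product, ht.1.1.2, ht.1.2.2, hμ]
            push_cast
            rw [sq]
      _ = _ := by
            simp only [Finset.sum_const, Finset.card_product, hPc, Finset.card_univ,
              Fintype.card_fun, Fintype.card_fin, nsmul_eq_mul]
            push_cast
            ring
  obtain ⟨f, -, hf⟩ := Finset.exists_le_of_sum_le Finset.univ_nonempty hsum
  refine ⟨f, fun B1 B2 h1 h2 a => ?_⟩
  by_contra! hlt
  set c := ((B1 ×ˢ B2).filter (fun uv => f uv = a)).card with hc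
  have hcle : (2 : ℝ) ^ c ≤ W f := by
    refine Finset.single_le_sum (s := (P ×ˢ P) ×ˢ (Finset.univ : Finset (Fin M)))
      (f := fun t => (2 : ℝ) ^ ((t.1.1 ×ˢ t.1.2).filter (fun uv => f uv = t.2)).card)
      (fun t _ => by positivity) (a := ((B1, B2), a)) ?_
    simp [hP, h1, h2]
  have hμc : 2 * μ < c := by
    rw [hμ, ← mul_div_assoc, div_lt_iff₀ hM0]
    linarith
  have hlow : Real.exp (μ / 3 + μ) ≤ (2 : ℝ) ^ c := by
    have : (2 : ℝ) ^ c = Real.exp (c * Real.log 2) := by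
      rw [Real.exp_nat_mul, Real.exp_log (by norm_num)]
    rw [this]
    apply Real.exp_le_exp.mpr
    nlinarith [Real.log_two_gt_d9]
  have hb : (N.choose K : ℝ) ^ 2 * M < Real.exp (μ / 3) := by
    have e : -((K : ℝ) ^ 2) / (3 * M) = -(μ / 3) := by rw [hμ]; field_simp
    rw [e, Real.exp_neg, ← div_eq_mul_inv, div_lt_one (Real.exp_pos _)] at hbound
    exact hbound
  have := mul_lt_mul_of_pos_right hb (Real.exp_pos μ)
  rw [← Real.exp_add] at this
  linarith
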